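/- arXiv:1105.2432 — 13 statements merged into one kernel-verified Lean document; each statement's English description precedes it below -/
import Mathlib

section
/- For every real number α > 0 and every real number β > 1 there exists a finite strategic game whose selfishness level equals α and whose price of stability equals β. -/
open Finset
open scoped ENNReal

/-- A strategic game with `n` players: each player `i` has a nonempty strategy
set `S i` and a real-valued payoff function `p i` on joint strategies. -/
structure Game (n : ℕ) where
  S : Fin n → Type
  ne : ∀ i, Nonempty (S i)
  p : Fin n → ((j : Fin n) → S j) → ℝ

namespace Game

variable {n : ℕ}

/-- The social welfare of a joint strategy. -/
def SW (G : Game n) (s : (j : Fin n) → G.S j) : ℝ := ∑ i, G.p i s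

/-- A joint strategy is a social optimum if it maximizes the social welfare. -/
def SocialOptimum (G : Game n) (s : (j : Fin n) → G.S j) : Prop :=
  ∀ t, G.SW t ≤ G.SW s

/-- A joint strategy is a (pure) Nash equilibrium if no unilateral deviation is profitable. -/
def NashEq (G : Game n) (s : (j : Fin n) → G.S j) : Prop :=
  ∀ (i : Fin n) (s' : G.S i), G.p i (Function.update s i s') ≤ G.p i s

/-- The altruistic version `G(α)` of a game `G`. -/
def alt (G : Game n) (α : ℝ) : Game n where
  S := G.S
  ne := G.ne
  p := fun i s => G.p i s + α * G.SW s

/-- `G` is `α`-selfish if some pure Nash equilibrium of `G(α)` is a social optimum of `G`. -/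
def Selfish (G : Game n) (α : ℝ) : Prop :=
  ∃ s, (G.alt α).NashEq s ∧ G.SocialOptimum s

/-- The selfishness level of `G`: the infimum of the nonnegative `α` for which `G`
is `α`-selfish (`⊤` if there is no such `α`). -/
noncomputable def selfishnessLevel (G : Game n) : ℝ≥0∞ :=
  sInf {x : ℝ≥0∞ | ∃ α : ℝ, 0 ≤ α ∧ G.Selfish α ∧ x = ENNReal.ofReal α}

/-- A social optimum is stable if no player profits from a unilateral deviation
to another social optimum. -/
def StableOptimum (G : Game n) (s : (j : Fin n) → G.S j) : Prop :=
  G.SocialOptimum s ∧ ∀ (i : Fin n) (s' : G.S i),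
    G.SocialOptimum (Function.update s i s') →
      G.p i (Function.update s i s') ≤ G.p i s

/-- The appeal factor of a unilateral deviation `s'` of player `i` from `s`. -/
noncomputable def AF (G : Game n) (s : (j : Fin n) → G.S j) (i : Fin n) (s' : G.S i) : ℝ :=
  (G.p i (Function.update s i s') - G.p i s) /
    (G.SW s - G.SW (Function.update s i s'))

end Game


/-- Payoff of player `i` when player 0 plays `x`. -/
noncomputable def exP (α β : ℝ) (i : Fin 2) (x : Bool) : ℝ :=
  if i = 0 then (if x = true then 0 else α * (β - 1))
    else (if x = true then β else 1 - α * (β - 1))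

/-- Welfare when player 0 plays `x`. -/
noncomputable def exW (β : ℝ) (x : Bool) : ℝ := if x = true then β else 1

/-- Player 0 decides everything: `true` is the social optimum, `false` the selfish choice. -/
noncomputable def exGame (α β : ℝ) : Game 2 where
  S := fun _ => Bool
  ne := fun _ => ⟨true⟩
  p := fun i s => exP α β i (s 0)

lemma exGame_SW (α β : ℝ) (s : Fin 2 → Bool) :
    (exGame α β).SW s = exW β (s 0) := by
  unfold Game.SW
  rw [Fin.sum_univ_two]
  change exP α β 0 (s 0) + exP α β 1 (s 0) = _
  cases s 0 <;> simp [exP, exW]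

lemma exGame_opt (α β : ℝ) (hβ : 1 < β) (s : Fin 2 → Bool) :
    (exGame α β).SocialOptimum s ↔ s 0 = true := by
  have key : (exGame α β).SocialOptimum s ↔ ∀ t : Fin 2 → Bool, exW β (t 0) ≤ exW β (s 0) := by
    constructor
    · intro h t
      rw [← exGame_SW α β t, ← exGame_SW α β s]
      exact h t
    · intro h t
      have h2 := h t
      rw [← exGame_SW α β t, ← exGame_SW α β s] at h2
      exact h2
  rw [key]
  constructor
  · intro h
    by_contra hs
    have := h (fun _ => true)
    simp [exW, hs] at this
    linarith
  · intro h t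
    cases ht : t 0 <;> simp [exW, h]
    exact hβ.le

lemma exGame_nash_alt (α β γ : ℝ) (s : Fin 2 → Bool) :
    ((exGame α β).alt γ).NashEq s ↔
      exP α β 0 (!(s 0)) + γ * exW β (!(s 0)) ≤ exP α β 0 (s 0) + γ * exW β (s 0) := by
  have key : ((exGame α β).alt γ).NashEq s ↔ ∀ (i : Fin 2) (b : Bool),
      exP α β i (Function.update s i b 0) + γ * exW β (Function.update s i b 0)
        ≤ exP α β i (s 0) + γ * exW β (s 0) := by
    constructor
    · intro h i b
      rw [← exGame_SW α β (Function.update s i b), ← exGame_SW α β s]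
      exact h i b
    · intro h i b
      have h2 := h i b
      rw [← exGame_SW α β (Function.update s i b), ← exGame_SW α β s] at h2
      exact h2
  rw [key]
  constructor
  · intro h
    simpa using h 0 (!(s 0))
  · intro h i b
    fin_cases i
    · simp only [Fin.zero_eta, Function.update_self]
      cases b <;> cases hs : s 0 <;> simp_all
    · simp

lemma exGame_nash (α β : ℝ) (hα : 0 < α) (hβ : 1 < β) (s : Fin 2 → Bool) :
    (exGame α β).NashEq s ↔ s 0 = false := by
  have hx : 0 < α * (β - 1) := mul_pos hα (by linarith)
  have key : (exGame α β).NashEq s ↔ ((exGame α β).alt 0).NashEq s := by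
    unfold Game.NashEq Game.alt
    simp only [zero_mul, add_zero]
  rw [key, exGame_nash_alt]
  cases s 0 <;> simp [exP, hx, hx.le]

lemma exGame_selfish (α β γ : ℝ) (hβ : 1 < β) :
    (exGame α β).Selfish γ ↔ α ≤ γ := by
  have hb : 0 < β - 1 := by linarith
  constructor
  · rintro ⟨s, hn, ho⟩
    have h1 := (exGame_opt α β hβ s).1 ho
    have h2 := (exGame_nash_alt α β γ s).1 hn
    simp [exP, exW, h1] at h2
    exact le_of_mul_le_mul_right (by linarith) hb
  · intro h
    refine ⟨fun _ => true, (exGame_nash_alt α β γ _).2 ?_, (exGame_opt α β hβ _).2 rfl⟩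
    have h3 := mul_le_mul_of_nonneg_right h hb.le
    simp [exP, exW]
    linarith

/-- For every real `α > 0` and `β > 1` there is a finite strategic game whose
selfishness level equals `α` and whose price of stability equals `β`. -/
theorem selfishness_level_and_price_of_stability_arbitrary (α β : ℝ) (hα : 0 < α) (hβ : 1 < β) :
    ∃ (n : ℕ), 1 < n ∧ ∃ G : Game n, (∀ i, Finite (G.S i)) ∧
      G.selfishnessLevel = ENNReal.ofReal α ∧
      ∃ s s', G.SocialOptimum s ∧ G.NashEq s' ∧
        (∀ t, G.NashEq t → G.SW t ≤ G.SW s') ∧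
        G.SW s / G.SW s' = β := by
  refine ⟨2, by norm_num, exGame α β, fun _ => inferInstanceAs (Finite Bool), ?_,
    fun _ => true, fun _ => false, (exGame_opt α β hβ _).2 rfl,
    (exGame_nash α β hα hβ _).2 rfl, ?_, ?_⟩
  · apply le_antisymm
    · exact sInf_le ⟨α, hα.le, (exGame_selfish α β α hβ).2 le_rfl, rfl⟩
    · apply le_sInf
      rintro x ⟨γ, -, hγ, rfl⟩
      exact ENNReal.ofReal_le_ofReal ((exGame_selfish α β γ hβ).1 hγ)
  · intro t ht
    have := (exGame_nash α β hα hβ t).1 ht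
    exact ((exGame_SW α β t).trans ((congrArg (exW β) this).trans
      (exGame_SW α β (fun _ => false)).symm)).le
  · rw [exGame_SW, exGame_SW]
    simp [exW]
end

section
/- For every strategic game G with n players and all α, β ≥ 0, the games G(α + β) and (G(α))(β/(1 + nα)) are identical, i.e., for every player i and every joint strategy s, the payoff of player i at s in G(α + β) equals the payoff of player i at s in the altruistic version of G(α) with parameter β/(1 + nα). -/
open Finset
open scoped ENNReal

/-- the games `G(α + β)` and `(G(α))(β/(1 + nα))` are identical: every player
gets the same payoff at every joint strategy. -/
theorem alt_alt_eq_alt_add {n : ℕ} (G : Game n) (α β : ℝ) (hα : 0 ≤ α) (hβ : 0 ≤ β) :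
    ∀ (i : Fin n) (s : (j : Fin n) → G.S j),
      (G.alt (α + β)).p i s = ((G.alt α).alt (β / (1 + n * α))).p i s := by
  intro i s
  have h : (G.alt α).SW s = (1 + n * α) * G.SW s := by
    change ∑ i, (G.p i s + α * G.SW s) = _
    rw [Finset.sum_add_distrib, Finset.sum_const, Finset.card_univ, Fintype.card_fin, nsmul_eq_mul]
    change G.SW s + _ = _
    ring
  change G.p i s + (α + β) * G.SW s
    = (G.p i s + α * G.SW s) + (β / (1 + n * α)) * (G.alt α).SW s
  rw [h]
  have hpos : (1 + n * α : ℝ) ≠ 0 := by positivity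
  rw [← mul_assoc, div_mul_cancel₀ _ hpos]
  ring
end

section
/- Let G be a strategic game with n players. For α ∈ ℝ_{≥0}, G is α-selfish if and only if G is β-selfish in Model B with β = αn/(1 + αn) ∈ [0,1], where G is β-selfish in Model B means that some pure Nash equilibrium of the game with payoffs r_i^β(s) := (1 − β)·p_i(s) + (β/n)·SW(s) is a social optimum of G. -/
open Finset
open scoped ENNReal

namespace Game

/-- The Model B (Chen–Kempe) altruistic version of `G` with parameter `β`:
payoffs `(1 - β)·pᵢ(s) + (β/n)·SW(s)`. -/
noncomputable def modelB {n : ℕ} (G : Game n) (β : ℝ) : Game n where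
  S := G.S
  ne := G.ne
  p := fun i s => (1 - β) * G.p i s + (β / n) * G.SW s

/-- `G` is `β`-selfish in Model B if some pure Nash equilibrium of `modelB G β`
is a social optimum of `G`. -/
def SelfishB {n : ℕ} (G : Game n) (β : ℝ) : Prop :=
  ∃ s, (G.modelB β).NashEq s ∧ G.SocialOptimum s

end Game

/-- for `α ≥ 0`, `G` is `α`-selfish iff `G` is `β`-selfish in Model B with
`β = αn/(1 + αn) ∈ [0,1]`. -/
theorem selfish_iff_modelB_selfish {n : ℕ} (hn : 1 < n) (G : Game n) (α : ℝ) (hα : 0 ≤ α) :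
    α * n / (1 + α * n) ∈ Set.Icc (0 : ℝ) 1 ∧
    (G.Selfish α ↔ G.SelfishB (α * n / (1 + α * n))) := by
  have hn0 : (0 : ℝ) < n := by
    have : 0 < n := by omega
    exact_mod_cast this
  have hD : 0 < 1 + α * n := by positivity
  refine ⟨⟨by positivity, ?_⟩, ?_⟩
  · rw [div_le_one hD]
    linarith
  · have key : ∀ (i : Fin n) (t : (j : Fin n) → G.S j),
        (1 - α * n / (1 + α * n)) * G.p i t + (α * n / (1 + α * n) / n) * G.SW t
          = (1 + α * n)⁻¹ * (G.p i t + α * G.SW t) := by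
      intro i t
      field_simp
      ring
    have hN : ∀ s : (j : Fin n) → G.S j, (G.alt α).NashEq s ↔
        (G.modelB (α * n / (1 + α * n))).NashEq s := by
      intro s
      refine forall_congr' fun i => forall_congr' fun s' => ?_
      change G.p i (Function.update s i s') + α * G.SW (Function.update s i s')
          ≤ G.p i s + α * G.SW s ↔
        (1 - α * n / (1 + α * n)) * G.p i (Function.update s i s')
          + (α * n / (1 + α * n) / n) * G.SW (Function.update s i s')
          ≤ (1 - α * n / (1 + α * n)) * G.p i s + (α * n / (1 + α * n) / n) * G.SW s
      rw [key, key]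
      exact (mul_le_mul_iff_right₀ (inv_pos.mpr hD)).symm
    exact exists_congr fun s => and_congr (hN s) Iff.rfl
end

section
/- Let G be a strategic game, α ≥ 0, and let s be a stable social optimum of G. Then s is a Nash equilibrium of G(α) if and only if for all players i ∈ N and all s'_i ∈ U_i(s), α ≥ AF_i(s'_i, s), where U_i(s) := {s'_i ∈ S_i : p_i(s'_i, s_{-i}) > p_i(s_i, s_{-i})} and AF_i(s'_i, s) := (p_i(s'_i, s_{-i}) − p_i(s_i, s_{-i})) / (SW(s_i, s_{-i}) − SW(s'_i, s_{-i})). -/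
open Finset
open scoped ENNReal

/-- a stable social optimum `s` of `G` is a Nash equilibrium of `G(α)` iff
`α` is at least the appeal factor of every profitable unilateral deviation from `s`. -/
theorem nashEq_alt_iff_appeal_factors_le {n : ℕ} (G : Game n) (α : ℝ) (hα : 0 ≤ α)
    (s : (j : Fin n) → G.S j) (hs : G.StableOptimum s) :
    (G.alt α).NashEq s ↔
      ∀ (i : Fin n) (s' : G.S i),
        G.p i s < G.p i (Function.update s i s') → G.AF s i s' ≤ α := by
  have key : ∀ (i : Fin n) (s' : G.S i), G.p i s < G.p i (Function.update s i s') →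
      0 < G.SW s - G.SW (Function.update s i s') := by
    intro i s' h
    rcases lt_or_ge (G.SW (Function.update s i s')) (G.SW s) with h1 | h1
    · linarith
    · exact absurd (hs.2 i s' fun t => (hs.1 t).trans h1) (not_le.mpr h)
  constructor
  · intro h i s' hlt
    have h2 : G.p i (Function.update s i s') + α * G.SW (Function.update s i s')
        ≤ G.p i s + α * G.SW s := h i s'
    unfold Game.AF
    rw [div_le_iff₀ (key i s' hlt)]
    linarith
  · intro h i s'
    change G.p i (Function.update s i s') + α * G.SW (Function.update s i s')
        ≤ G.p i s + α * G.SW s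
    rcases lt_or_ge (G.p i s) (G.p i (Function.update s i s')) with h1 | h1
    · have h2 := h i s' h1
      unfold Game.AF at h2
      rw [div_le_iff₀ (key i s' h1)] at h2
      linarith
    · have := mul_le_mul_of_nonneg_left (hs.1 (Function.update s i s')) hα
      linarith
end

section
/- Let G be a finite strategic game (all strategy sets are finite). Then the selfishness level of G is finite if and only if G has a stable social optimum. In particular, if G has a unique social optimum, then its selfishness level is finite. -/
open Finset
open scoped ENNReal

theorem Game.level_ne_top_iff {n : ℕ} (G : Game n) :
    G.selfishnessLevel ≠ ⊤ ↔ ∃ α : ℝ, 0 ≤ α ∧ G.Selfish α := by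
  constructor
  · intro h
    by_contra hc
    apply h
    unfold Game.selfishnessLevel
    rw [sInf_eq_top]
    rintro x ⟨α, h0, hs, -⟩
    exact absurd ⟨α, h0, hs⟩ hc
  · rintro ⟨α, h0, hs⟩
    have : G.selfishnessLevel ≤ ENNReal.ofReal α := sInf_le ⟨α, h0, hs, rfl⟩
    exact ne_top_of_le_ne_top ENNReal.ofReal_ne_top this

theorem Game.level_of_stable {n : ℕ} (G : Game n) (hfin : ∀ i, Finite (G.S i))
    (h : ∃ s, G.StableOptimum s) : G.selfishnessLevel ≠ ⊤ := by
  obtain ⟨s, hs, hst⟩ := h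
  rw [Game.level_ne_top_iff]
  obtain ⟨M, hM⟩ := (Set.finite_range (fun x : (Σ i, G.S i) => G.AF s x.1 x.2)).bddAbove
  refine ⟨max M 0, le_max_right _ _, s, ?_, hs⟩
  intro i s'
  change G.p i (Function.update s i s') + max M 0 * G.SW (Function.update s i s')
    ≤ G.p i s + max M 0 * G.SW s
  have hle := hs (Function.update s i s')
  rcases hle.eq_or_lt with he | hlt
  · have := hst i s' (fun t => he ▸ hs t)
    rw [he]
    linarith
  · have h1 : G.AF s i s' ≤ max M 0 := le_trans (hM ⟨⟨i, s'⟩, rfl⟩) (le_max_left _ _)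
    unfold Game.AF at h1
    rw [div_le_iff₀ (by linarith)] at h1
    linarith

/-- a finite game has finite selfishness level iff it has a stable social
optimum; in particular a finite game with a unique social optimum has finite
selfishness level. -/
theorem finite_selfishnessLevel_iff_stableOptimum {n : ℕ} (G : Game n)
    (hfin : ∀ i, Finite (G.S i)) :
    (G.selfishnessLevel ≠ ⊤ ↔ ∃ s, G.StableOptimum s) ∧
    ((∃! s, G.SocialOptimum s) → G.selfishnessLevel ≠ ⊤) := by
  refine ⟨⟨?_, G.level_of_stable hfin⟩, ?_⟩
  · rw [Game.level_ne_top_iff]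
    rintro ⟨α, h0, s, hn, hs⟩
    refine ⟨s, hs, fun i s' ho => ?_⟩
    have h1 : G.p i (Function.update s i s') + α * G.SW (Function.update s i s')
      ≤ G.p i s + α * G.SW s := hn i s'
    rw [le_antisymm (hs _) (ho s)] at h1
    linarith
  · rintro ⟨s, hs, hu⟩
    refine G.level_of_stable hfin ⟨s, hs, fun i s' ho => ?_⟩
    rw [hu _ ho]
end

section
/- Let G be a strategic game and let 0 ≤ α < β be real numbers. If G is α-selfish, then G is β-selfish. -/
open Finset
open scoped ENNReal

/-- if `0 ≤ α < β` and `G` is `α`-selfish, then `G` is `β`-selfish. -/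
theorem selfish_mono {n : ℕ} (G : Game n) (α β : ℝ) (hα : 0 ≤ α) (hαβ : α < β)
    (h : G.Selfish α) : G.Selfish β := by
  obtain ⟨s, hs, ho⟩ := h
  refine ⟨s, fun i s' => ?_, ho⟩
  have h1 : G.p i (Function.update s i s') + α * G.SW (Function.update s i s')
      ≤ G.p i s + α * G.SW s := hs i s'
  have h2 := ho (Function.update s i s')
  change G.p i (Function.update s i s') + β * G.SW (Function.update s i s')
      ≤ G.p i s + β * G.SW s
  have h3 := mul_le_mul_of_nonneg_left h2 (sub_nonneg.mpr hαβ.le)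
  linarith
end

section
/- For every function f : ℕ → ℝ_{≥0} and every integer n > 1, there exists a strategic game with n players whose selfishness level equals f(n). (One such game: each player i ∈ {1,...,n} has strategies {0,1}; the payoff of player i at joint strategy s is 0 if s is the all-ones strategy profile, f(n) if s_i = 0 and s_j = 1 for all j < i, and −(f(n)+1)/(n−1) otherwise.) -/
open Finset
open scoped ENNReal

/-- for every `f : ℕ → ℝ≥0` and every `n > 1` there is a strategic game
with `n` players whose selfishness level equals `f(n)`. -/
theorem exists_game_selfishnessLevel_eq (f : ℕ → ℝ) (hf : ∀ m, 0 ≤ f m)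
    (n : ℕ) (hn : 1 < n) :
    ∃ G : Game n, G.selfishnessLevel = ENNReal.ofReal (f n) := by
  set c := f n with hc
  have hc0 : 0 ≤ c := hf n
  let a : Fin n := ⟨0, by omega⟩
  let b : Fin n := ⟨1, hn⟩
  have hab : a ≠ b := by simp [a, b]
  let G : Game n :=
    { S := fun _ => Bool
      ne := fun _ => ⟨true⟩
      p := fun i s => if s a = true then 0 else
        (if i = a then c else 0) - (if i = b then c + 1 else 0) }
  have hSW : ∀ s : Fin n → Bool, G.SW s = if s a = true then 0 else -1 := by
    intro s
    by_cases h : s a = true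
    · simp [Game.SW, G, h]
    · simp [Game.SW, G, h, Finset.sum_sub_distrib]
  have hp : ∀ (α : ℝ) (i : Fin n) (s : Fin n → Bool), (G.alt α).p i s =
      (if s a = true then 0 else
        (if i = a then c else 0) - (if i = b then c + 1 else 0)) +
        α * (if s a = true then 0 else -1) := by
    intro α i s
    rw [← hSW s]
    rfl
  have hopt : ∀ s : Fin n → Bool, G.SocialOptimum s → s a = true := by
    intro s h
    have h1 : G.SW (fun _ => true) ≤ G.SW s := h (fun _ => true)
    rw [hSW, hSW] at h1
    by_contra h2
    rw [if_pos rfl, if_neg h2] at h1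
    linarith
  refine ⟨G, le_antisymm (sInf_le ⟨c, hc0, ⟨fun _ => true, ?_, ?_⟩, rfl⟩) (le_sInf ?_)⟩
  · intro i s'
    change Bool at s'
    refine (hp c i _).trans_le (le_trans ?_ (hp c i _).ge)
    by_cases hi : i = a
    · subst hi
      split_ifs <;> simp_all
    · have : Function.update (fun _ : Fin n => true) i s' a = true := by
        rw [Function.update_of_ne (Ne.symm hi)]
      erw [if_pos this, if_pos this]
      simp
  · intro t
    refine (hSW t).trans_le (le_trans ?_ (hSW _).ge)
    split_ifs <;> simp_all
  · rintro x ⟨α, h0, ⟨s, hN, hO⟩, rfl⟩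
    apply ENNReal.ofReal_le_ofReal
    have hs := hopt s hO
    have h := hN a false
    have h1 : ∀ t : Fin n → Bool, t a = true → (G.alt α).p a t = 0 := by
      intro t ht
      rw [hp, if_pos ht, if_pos ht]; ring
    have h2 : ∀ t : Fin n → Bool, t a = false → (G.alt α).p a t = c - α := by
      intro t ht
      rw [hp]; simp [ht, hab]; ring
    have hu : ∀ t : Fin n → Bool, Function.update t a false a = false := by
      intro t; simp
    have e1 := h1 s hs
    have e2 := h2 _ (hu s)
    have h3 : c - α ≤ 0 := e2.ge.trans (h.trans e1.le)
    linarith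
end

section
/- Every finite ordinal potential game has a finite selfishness level; that is, if G is a finite strategic game admitting an ordinal potential function, then there exists α ∈ ℝ_{≥0} such that G is α-selfish. -/
open Finset
open scoped ENNReal

/-- every finite ordinal potential game has a finite selfishness level,
i.e., it is `α`-selfish for some `α ≥ 0`. -/
theorem finite_ordinal_potential_game_selfish {n : ℕ} (G : Game n)
    (hfin : ∀ i, Finite (G.S i))
    (P : ((j : Fin n) → G.S j) → ℝ)
    (hP : ∀ (i : Fin n) (s : (j : Fin n) → G.S j) (s' : G.S i),
      G.p i (Function.update s i s') > G.p i s ↔ P (Function.update s i s') > P s) :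
    ∃ α : ℝ, 0 ≤ α ∧ G.Selfish α := by
  have : ∀ i, Nonempty (G.S i) := G.ne
  obtain ⟨m, hm⟩ := Finite.exists_max G.SW
  have hfinite : Set.Finite {s | G.SocialOptimum s} := Set.toFinite _
  obtain ⟨s, hs, hmax⟩ := Set.exists_max_image _ P hfinite ⟨m, hm⟩
  obtain ⟨B, hB⟩ := (Set.finite_range
    (fun x : (Σ i, G.S i) => G.AF s x.1 x.2)).bddAbove
  refine ⟨max B 0, le_max_right _ _, s, ?_, hs⟩
  intro i (s' : G.S i)
  change G.p i (Function.update s i s') + max B 0 * G.SW (Function.update s i s')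
    ≤ G.p i s + max B 0 * G.SW s
  have hle : G.SW (Function.update s i s') ≤ G.SW s := hs _
  rcases hle.eq_or_lt with h | h
  · have hopt : G.SocialOptimum (Function.update s i s') := fun t => by
      rw [h]; exact hs t
    have h1 : ¬ P (Function.update s i s') > P s := not_lt.mpr (hmax _ hopt)
    rw [← hP] at h1
    rw [h]
    linarith [not_lt.mp h1]
  · have h2 : G.AF s i s' ≤ max B 0 :=
      le_trans (hB ⟨⟨i, s'⟩, rfl⟩) (le_max_left _ _)
    unfold Game.AF at h2
    rw [div_le_iff₀ (by linarith)] at h2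
    linarith
end

section
/- The selfishness level of every fair cost sharing game with non-negative integer facility costs is at most max{0, (1/2)·L·c_max − 1}, where L := max_{i ∈ N, s_i ∈ S_i} |s_i| is the maximum number of facilities any player can choose and c_max is the maximum facility cost. -/
open Finset
open scoped ENNReal

/-- A fair cost sharing game: `n` players, a finite set `E` of facilities with
non-negative costs, and for each player a nonempty set of admissible facility subsets. -/
structure CostSharingGame (n : ℕ) (E : Type) [Fintype E] [DecidableEq E] where
  strategies : Fin n → Finset (Finset E)
  ne : ∀ i, (strategies i).Nonempty
  cost : E → ℝ
  cost_nonneg : ∀ e, 0 ≤ cost e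

namespace CostSharingGame

variable {n : ℕ} {E : Type} [Fintype E] [DecidableEq E]

/-- A joint strategy is valid if every player plays an admissible facility set. -/
def Valid (G : CostSharingGame n E) (s : Fin n → Finset E) : Prop :=
  ∀ i, s i ∈ G.strategies i

/-- The number of players using facility `e` under the joint strategy `s`. -/
def load (s : Fin n → Finset E) (e : E) : ℕ :=
  (Finset.univ.filter fun i => e ∈ s i).card

/-- The cost of player `i`: each used facility's cost is shared evenly among its users. -/
noncomputable def playerCost (G : CostSharingGame n E) (i : Fin n) (s : Fin n → Finset E) : ℝ :=
  ∑ e ∈ s i, G.cost e / load s e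

/-- The social cost of a joint strategy. -/
noncomputable def SC (G : CostSharingGame n E) (s : Fin n → Finset E) : ℝ :=
  ∑ i, G.playerCost i s

/-- A valid joint strategy minimizing the social cost. -/
def SocialOptimum (G : CostSharingGame n E) (s : Fin n → Finset E) : Prop :=
  G.Valid s ∧ ∀ t, G.Valid t → G.SC s ≤ G.SC t

/-- A Nash equilibrium of the altruistic version `G(α)`, whose cost functions are
`rᵢ(s) = cᵢ(s) + α·SC(s)`. -/
def NashEqAlt (G : CostSharingGame n E) (α : ℝ) (s : Fin n → Finset E) : Prop :=
  G.Valid s ∧ ∀ i, ∀ t ∈ G.strategies i,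
    G.playerCost i s + α * G.SC s ≤
      G.playerCost i (Function.update s i t) + α * G.SC (Function.update s i t)

/-- `G` is `α`-selfish if some pure Nash equilibrium of `G(α)` is a social optimum. -/
def Selfish (G : CostSharingGame n E) (α : ℝ) : Prop :=
  ∃ s, G.NashEqAlt α s ∧ G.SocialOptimum s

/-- The selfishness level of `G` (`⊤` if `G` is `α`-selfish for no `α ≥ 0`). -/
noncomputable def selfishnessLevel (G : CostSharingGame n E) : ℝ≥0∞ :=
  sInf {x : ℝ≥0∞ | ∃ α : ℝ, 0 ≤ α ∧ G.Selfish α ∧ x = ENNReal.ofReal α}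

end CostSharingGame


namespace CostSharingGame

variable {n : ℕ} {E : Type} [Fintype E] [DecidableEq E]

def others (s : Fin n → Finset E) (i : Fin n) (e : E) : ℕ :=
  (Finset.univ.filter fun j => j ≠ i ∧ e ∈ s j).card

lemma load_eq (s : Fin n → Finset E) (i : Fin n) (e : E) :
    load s e = others s i e + if e ∈ s i then 1 else 0 := by
  unfold load others
  split_ifs with h
  · have : (Finset.univ.filter fun j => e ∈ s j)
        = insert i (Finset.univ.filter fun j => j ≠ i ∧ e ∈ s j) := by
      ext j
      by_cases hj : j = i
      · subst hj; simp [h]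
      · simp [hj]
    rw [this, Finset.card_insert_of_notMem (by simp)]
  · rw [add_zero]
    congr 1
    ext j
    by_cases hj : j = i
    · subst hj; simp [h]
    · simp [hj]

lemma others_update (s : Fin n → Finset E) (i : Fin n) (t : Finset E) (e : E) :
    others (Function.update s i t) i e = others s i e := by
  unfold others
  congr 1
  ext j
  by_cases hj : j = i
  · simp [hj]
  · simp [hj]

lemma playerCost_eq (G : CostSharingGame n E) (i : Fin n) (s : Fin n → Finset E) :
    G.playerCost i s = ∑ e, if e ∈ s i then G.cost e / ((others s i e : ℝ) + 1) else 0 := by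
  unfold playerCost
  rw [← Finset.sum_filter]
  refine Finset.sum_congr (by ext; simp) ?_
  intro e he
  rw [load_eq s i e]
  simp at he
  simp [he]

lemma SC_eq (G : CostSharingGame n E) (s : Fin n → Finset E) :
    G.SC s = ∑ e, if load s e = 0 then 0 else G.cost e := by
  have h : ∀ i, G.playerCost i s = ∑ e, if e ∈ s i then G.cost e / load s e else 0 := by
    intro i
    unfold playerCost
    rw [← Finset.sum_filter]
    exact Finset.sum_congr (by ext; simp) (fun _ _ => rfl)
  unfold SC
  simp_rw [h]
  rw [Finset.sum_comm]
  refine Finset.sum_congr rfl fun e _ => ?_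
  rw [← Finset.sum_filter, Finset.sum_const, nsmul_eq_mul]
  change (load s e : ℝ) * _ = _
  split_ifs with h0
  · simp [h0]
  · have : (load s e : ℝ) ≠ 0 := by exact_mod_cast h0
    field_simp

noncomputable def pot (G : CostSharingGame n E) (s : Fin n → Finset E) : ℝ :=
  ∑ e, G.cost e * ∑ k ∈ Finset.range (load s e), 1 / ((k : ℝ) + 1)

lemma pot_diff (G : CostSharingGame n E) (s : Fin n → Finset E) (i : Fin n) (t : Finset E) :
    G.pot (Function.update s i t) - G.pot s
      = G.playerCost i (Function.update s i t) - G.playerCost i s := by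
  rw [playerCost_eq, playerCost_eq]
  unfold pot
  rw [← Finset.sum_sub_distrib, ← Finset.sum_sub_distrib]
  refine Finset.sum_congr rfl fun e _ => ?_
  rw [load_eq s i e, load_eq (Function.update s i t) i e, others_update]
  simp only [Function.update_self]
  split_ifs <;> simp [Finset.sum_range_succ] <;> ring

lemma key (G : CostSharingGame n E) (s : Fin n → Finset E) (i : Fin n) (t : Finset E) :
    (G.SC (Function.update s i t) - G.SC s) - ∑ e ∈ s i, G.cost e / 2
      ≤ G.playerCost i (Function.update s i t) - G.playerCost i s := by
  have h : ∑ e ∈ s i, G.cost e / 2 = ∑ e, if e ∈ s i then G.cost e / 2 else 0 := by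
    rw [← Finset.sum_filter]
    exact Finset.sum_congr (by ext; simp) (fun _ _ => rfl)
  rw [playerCost_eq, playerCost_eq, SC_eq, SC_eq, h, ← Finset.sum_sub_distrib,
    ← Finset.sum_sub_distrib, ← Finset.sum_sub_distrib]
  refine Finset.sum_le_sum fun e _ => ?_
  rw [load_eq s i e, load_eq (Function.update s i t) i e, others_update]
  simp only [Function.update_self]
  have hc := G.cost_nonneg e
  rcases Nat.eq_zero_or_pos (others s i e) with h0 | h0
  · rw [h0]
    split_ifs <;> simp_all <;> linarith
  · have h1 : (1 : ℝ) ≤ others s i e := by exact_mod_cast h0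
    have h2 : G.cost e / ((others s i e : ℝ) + 1) ≤ G.cost e / 2 :=
      div_le_div_of_nonneg_left hc (by norm_num) (by linarith)
    have h3 : 0 ≤ G.cost e / ((others s i e : ℝ) + 1) := by positivity
    have h4 : ∀ m, others s i e + m ≠ 0 := by intro m; omega
    simp only [h4, if_false]
    split_ifs <;> linarith

lemma SC_int (G : CostSharingGame n E) (hint : ∀ e, ∃ k : ℕ, G.cost e = k)
    (s : Fin n → Finset E) : ∃ k : ℕ, G.SC s = k := by
  choose f hf using hint
  refine ⟨∑ e, if load s e = 0 then 0 else f e, ?_⟩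
  rw [SC_eq]
  push_cast
  exact Finset.sum_congr rfl fun e _ => by rw [hf]

lemma exists_opt (G : CostSharingGame n E) : ∃ s, G.SocialOptimum s ∧
    ∀ t, G.SocialOptimum t → G.pot s ≤ G.pot t := by
  classical
  have hv : ∀ s, s ∈ Fintype.piFinset G.strategies ↔ G.Valid s := by
    intro s; simp [Valid]
  obtain ⟨s0, hs0, hm0⟩ := Finset.exists_min_image (Fintype.piFinset G.strategies) G.SC
    (Fintype.piFinset_nonempty.2 G.ne)
  have ho : G.SocialOptimum s0 := ⟨(hv _).1 hs0, fun t ht => hm0 t ((hv _).2 ht)⟩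
  obtain ⟨s, hs, hm⟩ := Finset.exists_min_image
    ((Fintype.piFinset G.strategies).filter fun s => G.SocialOptimum s) G.pot
    ⟨s0, Finset.mem_filter.2 ⟨hs0, ho⟩⟩
  exact ⟨s, (Finset.mem_filter.1 hs).2,
    fun t ht => hm t (Finset.mem_filter.2 ⟨(hv _).2 ht.1, ht⟩)⟩

end CostSharingGame

/-- the selfishness level of every fair cost sharing game with non-negative
integer facility costs is at most `max {0, (1/2)·L·c_max - 1}`, where `L` is the maximum
number of facilities a player can choose. -/
theorem selfishnessLevel_integer_costSharing_le
    {n : ℕ} {E : Type} [Fintype E] [DecidableEq E] [Nonempty E]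
    (hn : 1 < n) (G : CostSharingGame n E)
    (hint : ∀ e, ∃ k : ℕ, G.cost e = k) :
    G.selfishnessLevel ≤ ENNReal.ofReal
      (max 0 ((1 / 2) * ((Finset.univ.sup fun i => (G.strategies i).sup Finset.card : ℕ) : ℝ) *
        Finset.univ.sup' Finset.univ_nonempty G.cost - 1)) := by
  obtain ⟨s, hs, hp⟩ := G.exists_opt
  refine sInf_le ⟨_, le_max_left _ _, ⟨s, ⟨hs.1, ?_⟩, hs⟩, rfl⟩
  intro i t ht
  set L : ℕ := Finset.univ.sup fun i => (G.strategies i).sup Finset.card with hL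
  set C : ℝ := Finset.univ.sup' Finset.univ_nonempty G.cost with hC
  set u := Function.update s i t with hu
  have huv : G.Valid u := by
    intro j
    by_cases hj : j = i
    · subst hj; simpa [hu] using ht
    · simpa [hu, hj] using hs.1 j
  have hle := hs.2 u huv
  rcases hle.eq_or_lt with heq | hlt
  · have huo : G.SocialOptimum u := ⟨huv, fun w hw => heq ▸ hs.2 w hw⟩
    have h1 := hp u huo
    have h2 := G.pot_diff s i t
    rw [← heq]
    linarith
  · have hd : 1 ≤ G.SC u - G.SC s := by
      obtain ⟨a, ha⟩ := G.SC_int hint s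
      obtain ⟨b, hb⟩ := G.SC_int hint u
      rw [ha, hb] at hlt ⊢
      have hab : a + 1 ≤ b := by exact_mod_cast hlt
      have : (a : ℝ) + 1 ≤ b := by exact_mod_cast hab
      linarith
    have hk := G.key s i t
    have hcC : ∀ e, G.cost e ≤ C := fun e => Finset.le_sup' G.cost (Finset.mem_univ e)
    have hC0 : 0 ≤ C := (G.cost_nonneg _).trans (hcC (Classical.arbitrary E))
    have hcard : (s i).card ≤ L :=
      (Finset.le_sup (f := Finset.card) (hs.1 i)).trans
        (Finset.le_sup (f := fun i => (G.strategies i).sup Finset.card) (Finset.mem_univ i))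
    have hcard' : ((s i).card : ℝ) ≤ L := by exact_mod_cast hcard
    have hsum : ∑ e ∈ s i, G.cost e / 2 ≤ 1 / 2 * (L : ℝ) * C := by
      calc ∑ e ∈ s i, G.cost e / 2 ≤ ∑ e ∈ s i, C / 2 :=
            Finset.sum_le_sum fun e _ => by linarith [hcC e]
        _ = (s i).card * (C / 2) := by simp
        _ ≤ L * (C / 2) := by gcongr
        _ = _ := by ring
    have hLC : 0 ≤ 1 / 2 * (L : ℝ) * C := by positivity
    have hm := le_max_right 0 (1 / 2 * (L : ℝ) * C - 1)
    have h5 := mul_le_mul_of_nonneg_right hm (by linarith : 0 ≤ G.SC u - G.SC s)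
    nlinarith
end

section
/- The selfishness level of every linear congestion game with non-negative integer coefficients is at most max{0, (1/2)·(L·Δ_max − Δ_min − 1)}, where L := max_{i ∈ N, s_i ∈ S_i} |s_i|, Δ_max := max_{e∈E} (a_e + b_e) and Δ_min := min_{e∈E} (a_e + b_e). -/
open Finset
open scoped ENNReal

/-- A linear congestion game with non-negative integer coefficients: `n` players, a finite
set `E` of facilities with delay functions `d_e(x) = a_e·x + b_e` (`a_e, b_e ∈ ℕ`), and for
each player a nonempty set of admissible facility subsets. -/
structure LinearCongestionGame (n : ℕ) (E : Type) [Fintype E] [DecidableEq E] where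
  strategies : Fin n → Finset (Finset E)
  ne : ∀ i, (strategies i).Nonempty
  a : E → ℕ
  b : E → ℕ

namespace LinearCongestionGame

variable {n : ℕ} {E : Type} [Fintype E] [DecidableEq E]

/-- A joint strategy is valid if every player plays an admissible facility set. -/
def Valid (G : LinearCongestionGame n E) (s : Fin n → Finset E) : Prop :=
  ∀ i, s i ∈ G.strategies i

/-- The number of players using facility `e` under the joint strategy `s`. -/
def load (s : Fin n → Finset E) (e : E) : ℕ :=
  (Finset.univ.filter fun i => e ∈ s i).card

/-- The cost of player `i`: the sum of the delays `a_e·x_e(s) + b_e` of his facilities. -/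
def playerCost (G : LinearCongestionGame n E) (i : Fin n) (s : Fin n → Finset E) : ℝ :=
  ∑ e ∈ s i, ((G.a e : ℝ) * load s e + (G.b e : ℝ))

/-- The social cost of a joint strategy. -/
def SC (G : LinearCongestionGame n E) (s : Fin n → Finset E) : ℝ :=
  ∑ i, G.playerCost i s

/-- A valid joint strategy minimizing the social cost. -/
def SocialOptimum (G : LinearCongestionGame n E) (s : Fin n → Finset E) : Prop :=
  G.Valid s ∧ ∀ t, G.Valid t → G.SC s ≤ G.SC t

/-- A Nash equilibrium of the altruistic version `G(α)`, whose cost functions are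
`rᵢ(s) = cᵢ(s) + α·SC(s)`. -/
def NashEqAlt (G : LinearCongestionGame n E) (α : ℝ) (s : Fin n → Finset E) : Prop :=
  G.Valid s ∧ ∀ i, ∀ t ∈ G.strategies i,
    G.playerCost i s + α * G.SC s ≤
      G.playerCost i (Function.update s i t) + α * G.SC (Function.update s i t)

/-- `G` is `α`-selfish if some pure Nash equilibrium of `G(α)` is a social optimum. -/
def Selfish (G : LinearCongestionGame n E) (α : ℝ) : Prop :=
  ∃ s, G.NashEqAlt α s ∧ G.SocialOptimum s

/-- The selfishness level of `G` (`⊤` if `G` is `α`-selfish for no `α ≥ 0`). -/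
noncomputable def selfishnessLevel (G : LinearCongestionGame n E) : ℝ≥0∞ :=
  sInf {x : ℝ≥0∞ | ∃ α : ℝ, 0 ≤ α ∧ G.Selfish α ∧ x = ENNReal.ofReal α}

end LinearCongestionGame

namespace LinearCongestionGame

variable {n : ℕ} {E : Type} [Fintype E] [DecidableEq E]

/-- weight of a strategy -/
def wt (G : LinearCongestionGame n E) (t : Finset E) : ℕ := ∑ e ∈ t, (G.a e + G.b e)

/-- load of the other players -/
def oload (i : Fin n) (s : Fin n → Finset E) (e : E) : ℕ :=
  ((Finset.univ.erase i).filter fun j => e ∈ s j).card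

lemma load_eq (i : Fin n) (s : Fin n → Finset E) (e : E) :
    load s e = oload i s e + if e ∈ s i then 1 else 0 := by
  unfold load oload
  rw [Finset.card_filter, Finset.card_filter, Finset.sum_erase_add _ _ (Finset.mem_univ i)]

lemma oload_update (i : Fin n) (s : Fin n → Finset E) (t : Finset E) (e : E) :
    oload i (Function.update s i t) e = oload i s e := by
  unfold oload
  congr 1
  apply Finset.filter_congr
  intro j hj
  rw [Function.update_of_ne (Finset.ne_of_mem_erase hj)]

lemma SC_eq (G : LinearCongestionGame n E) (s : Fin n → Finset E) :
    G.SC s = ∑ e, (load s e : ℝ) * ((G.a e : ℝ) * load s e + G.b e) := by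
  have h : ∀ i, G.playerCost i s =
      ∑ e, if e ∈ s i then ((G.a e : ℝ) * load s e + (G.b e : ℝ)) else 0 := by
    intro i
    simp [playerCost]
  unfold SC
  simp_rw [h]
  rw [Finset.sum_comm]
  refine Finset.sum_congr rfl fun e _ => ?_
  rw [← Finset.sum_filter, Finset.sum_const, nsmul_eq_mul]
  rfl

lemma SC_nat (G : LinearCongestionGame n E) (s : Fin n → Finset E) :
    ∃ k : ℕ, G.SC s = k :=
  ⟨∑ e, load s e * (G.a e * load s e + G.b e), by rw [SC_eq]; push_cast; rfl⟩

lemma key (G : LinearCongestionGame n E) (i : Fin n) (s : Fin n → Finset E) :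
    G.SC s - 2 * G.playerCost i s + G.wt (s i) =
      ∑ e, (oload i s e : ℝ) * ((G.a e : ℝ) * oload i s e + G.b e) := by
  have h : G.playerCost i s =
      ∑ e, if e ∈ s i then ((G.a e : ℝ) * load s e + (G.b e : ℝ)) else 0 := by
    simp [playerCost]
  have h2 : (G.wt (s i) : ℝ) = ∑ e, if e ∈ s i then ((G.a e : ℝ) + (G.b e : ℝ)) else 0 := by
    simp [wt]
  rw [SC_eq, h, h2, Finset.mul_sum, ← Finset.sum_sub_distrib, ← Finset.sum_add_distrib]
  refine Finset.sum_congr rfl fun e _ => ?_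
  rw [load_eq i s e]
  split_ifs
  · push_cast; ring
  · push_cast; ring

lemma SC_mono (G : LinearCongestionGame n E) (i : Fin n) (s : Fin n → Finset E)
    (t : Finset E) (h : t ⊆ s i) : G.SC (Function.update s i t) ≤ G.SC s := by
  rw [SC_eq, SC_eq]
  refine Finset.sum_le_sum fun e _ => ?_
  have hl : load (Function.update s i t) e ≤ load s e := by
    rw [load_eq i s, load_eq i (Function.update s i t), oload_update, Function.update_self]
    have := @h e
    split_ifs <;> simp_all
  have hl' : (load (Function.update s i t) e : ℝ) ≤ load s e := by exact_mod_cast hl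
  gcongr

end LinearCongestionGame

open LinearCongestionGame

/-- the selfishness level of every linear congestion game with non-negative
integer coefficients is at most `max {0, (1/2)·(L·Δ_max - Δ_min - 1)}`, where `L` is the
maximum number of facilities a player can choose, `Δ_max = max_e (a_e + b_e)` and
`Δ_min = min_e (a_e + b_e)`. -/
theorem selfishnessLevel_linearCongestion_le
    {n : ℕ} {E : Type} [Fintype E] [DecidableEq E] [Nonempty E]
    (hn : 1 < n) (G : LinearCongestionGame n E) :
    G.selfishnessLevel ≤ ENNReal.ofReal
      (max 0 ((1 / 2) *
        (((Finset.univ.sup fun i => (G.strategies i).sup Finset.card : ℕ) : ℝ) *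
          ((Finset.univ.sup' Finset.univ_nonempty fun e => G.a e + G.b e : ℕ) : ℝ) -
          ((Finset.univ.inf' Finset.univ_nonempty fun e => G.a e + G.b e : ℕ) : ℝ) - 1))) := by
  classical
  set L := Finset.univ.sup fun i => (G.strategies i).sup Finset.card with hL
  set M := Finset.univ.sup' Finset.univ_nonempty fun e => G.a e + G.b e with hM
  set m := Finset.univ.inf' Finset.univ_nonempty fun e => G.a e + G.b e with hm
  set α : ℝ := max 0 ((1 / 2) * ((L : ℝ) * (M : ℝ) - (m : ℝ) - 1)) with hα
  have hα0 : 0 ≤ α := le_max_left _ _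
  have hα1 : (1 / 2) * ((L : ℝ) * (M : ℝ) - (m : ℝ) - 1) ≤ α := le_max_right _ _
  refine sInf_le ⟨α, hα0, ?_, rfl⟩
  have hV : ∀ s, s ∈ Fintype.piFinset G.strategies ↔ G.Valid s := fun s => Fintype.mem_piFinset
  obtain ⟨s₀, hs₀, hmin₀⟩ := Finset.exists_min_image (Fintype.piFinset G.strategies) G.SC
    (Fintype.piFinset_nonempty.2 G.ne)
  obtain ⟨s, hs, hmin⟩ := Finset.exists_min_image
    ((Fintype.piFinset G.strategies).filter fun s => G.SC s ≤ G.SC s₀)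
    (fun s => ∑ i, G.wt (s i)) ⟨s₀, by simp [hs₀]⟩
  rw [Finset.mem_filter, hV] at hs
  have hopt : G.SocialOptimum s :=
    ⟨hs.1, fun t ht => hs.2.trans (hmin₀ t ((hV t).2 ht))⟩
  refine ⟨s, ⟨hs.1, fun i t ht => ?_⟩, hopt⟩
  set s' := Function.update s i t with hs'
  have hs'i : s' i = t := Function.update_self ..
  have hv' : G.Valid s' := by
    intro j
    by_cases hj : j = i
    · subst hj; rw [hs'i]; exact ht
    · rw [hs', Function.update_of_ne hj]; exact hs.1 j
  have hle : G.SC s ≤ G.SC s' := hopt.2 s' hv'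
  have k1 := key G i s
  have k2 := key G i s'
  simp_rw [hs', oload_update] at k2
  rw [← hs', ← k1, hs'i] at k2
  rcases hle.eq_or_lt with heq | hlt
  · have hw := hmin s' (by rw [Finset.mem_filter, hV]; exact ⟨hv', heq ▸ hs.2⟩)
    have e1 := Finset.sum_erase_add Finset.univ (fun j => G.wt (s j)) (Finset.mem_univ i)
    have e2 := Finset.sum_erase_add Finset.univ (fun j => G.wt (s' j)) (Finset.mem_univ i)
    have e3 : ∑ j ∈ Finset.univ.erase i, G.wt (s' j) = ∑ j ∈ Finset.univ.erase i, G.wt (s j) :=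
      Finset.sum_congr rfl
        (fun j hj => by rw [hs', Function.update_of_ne (Finset.ne_of_mem_erase hj)])
    rw [← e1, ← e2, e3, hs'i] at hw
    have hw2 : (G.wt (s i) : ℝ) ≤ G.wt t := by exact_mod_cast Nat.le_of_add_le_add_left hw
    rw [← heq] at k2 ⊢
    linarith
  · have hD : G.SC s + 1 ≤ G.SC s' := by
      obtain ⟨p, hp⟩ := SC_nat G s
      obtain ⟨q, hq⟩ := SC_nat G s'
      rw [hp, hq] at hlt ⊢
      exact_mod_cast hlt
    have hns : ¬ t ⊆ s i := fun h => absurd (SC_mono G i s t h) (not_le.2 hlt)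
    obtain ⟨e, het, hes⟩ := Finset.not_subset.1 hns
    have hP : (m : ℝ) ≤ G.wt t := by
      have h1 : m ≤ G.a e + G.b e := Finset.inf'_le _ (Finset.mem_univ e)
      have h2 : G.a e + G.b e ≤ G.wt t :=
        Finset.single_le_sum (f := fun e => G.a e + G.b e) (fun _ _ => Nat.zero_le _) het
      exact_mod_cast h1.trans h2
    have hQ : (G.wt (s i) : ℝ) ≤ L * M := by
      have h1 : G.wt (s i) ≤ (s i).card * M := by
        unfold LinearCongestionGame.wt
        refine (Finset.sum_le_card_nsmul _ _ M fun e _ => ?_).trans_eq (smul_eq_mul _ _)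
        exact Finset.le_sup' (fun e => G.a e + G.b e) (Finset.mem_univ e)
      have h2 : (s i).card ≤ L :=
        (Finset.le_sup (f := Finset.card) (hs.1 i)).trans
          (Finset.le_sup (f := fun i => (G.strategies i).sup Finset.card) (Finset.mem_univ i))
      exact_mod_cast h1.trans (Nat.mul_le_mul_right M h2)
    nlinarith [mul_le_mul_of_nonneg_left (sub_nonneg.2 hD) hα0]
end

section
/- For every n ≥ 2, the selfishness level of the n-players Prisoner's Dilemma game, in which each player i ∈ {1,...,n} has strategy set {0,1} and payoff p_i(s) := 1 − s_i + 2·Σ_{j ≠ i} s_j, equals 1/(2n − 3). -/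
open Finset
open scoped ENNReal

/-- The `n`-players Prisoner's Dilemma game: each player has strategies `{0, 1}` and
payoff `pᵢ(s) = 1 - sᵢ + 2·∑_{j ≠ i} sⱼ`. -/
def prisonersDilemma (n : ℕ) : Game n where
  S := fun _ => Fin 2
  ne := fun _ => inferInstance
  p := fun i s => 1 - ((s i : ℕ) : ℝ) + 2 * ∑ j ∈ Finset.univ.erase i, ((s j : ℕ) : ℝ)

theorem pd_SW (n : ℕ) (s : Fin n → Fin 2) :
    (prisonersDilemma n).SW s = n + (2 * (n : ℝ) - 3) * ∑ j, ((s j : ℕ) : ℝ) := by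
  have h : ∀ i : Fin n, (prisonersDilemma n).p i s
      = 1 + 2 * (∑ j, ((s j : ℕ) : ℝ)) - 3 * ((s i : ℕ) : ℝ) := by
    intro i
    have := Finset.add_sum_erase Finset.univ (fun j => ((s j : ℕ) : ℝ)) (Finset.mem_univ i)
    simp only [prisonersDilemma]
    linarith
  unfold Game.SW
  rw [Finset.sum_congr rfl (fun i _ => h i), Finset.sum_sub_distrib, ← Finset.mul_sum]
  simp
  ring

theorem pd_sum_update (n : ℕ) (s : Fin n → Fin 2) (i : Fin n) (a : Fin 2) :
    ∑ j, ((Function.update s i a j : ℕ) : ℝ)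
      = ∑ j, ((s j : ℕ) : ℝ) - ((s i : ℕ) : ℝ) + ((a : ℕ) : ℝ) := by
  have h1 := Finset.add_sum_erase Finset.univ (fun j => ((s j : ℕ) : ℝ)) (Finset.mem_univ i)
  have h2 := Finset.add_sum_erase Finset.univ
    (fun j => ((Function.update s i a j : ℕ) : ℝ)) (Finset.mem_univ i)
  have h3 : ∑ j ∈ Finset.univ.erase i, ((Function.update s i a j : ℕ) : ℝ)
      = ∑ j ∈ Finset.univ.erase i, ((s j : ℕ) : ℝ) :=
    Finset.sum_congr rfl (fun j hj => by
      rw [Function.update_of_ne (Finset.ne_of_mem_erase hj)])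
  simp only [Function.update_self] at h1 h2
  linarith

theorem pd_p_update (n : ℕ) (s : Fin n → Fin 2) (i : Fin n) (a : Fin 2) :
    (prisonersDilemma n).p i (Function.update s i a)
      = (prisonersDilemma n).p i s + ((s i : ℕ) : ℝ) - ((a : ℕ) : ℝ) := by
  have h3 : ∑ j ∈ Finset.univ.erase i, ((Function.update s i a j : ℕ) : ℝ)
      = ∑ j ∈ Finset.univ.erase i, ((s j : ℕ) : ℝ) :=
    Finset.sum_congr rfl (fun j hj => by
      rw [Function.update_of_ne (Finset.ne_of_mem_erase hj)])
  change 1 - ((Function.update s i a i : ℕ) : ℝ) +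
    2 * ∑ j ∈ Finset.univ.erase i, ((Function.update s i a j : ℕ) : ℝ) =
    (1 - ((s i : ℕ) : ℝ) + 2 * ∑ j ∈ Finset.univ.erase i, ((s j : ℕ) : ℝ)) + _ - _
  rw [h3, Function.update_self]
  ring

theorem pd_SW_update (n : ℕ) (s : Fin n → Fin 2) (i : Fin n) (a : Fin 2) :
    (prisonersDilemma n).SW (Function.update s i a : Fin n → Fin 2)
      = (prisonersDilemma n).SW s
        + (2 * (n : ℝ) - 3) * (((a : ℕ) : ℝ) - ((s i : ℕ) : ℝ)) := by
  rw [pd_SW, pd_SW, pd_sum_update]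
  ring

theorem pd_alt_update (n : ℕ) (α : ℝ) (s : Fin n → Fin 2) (i : Fin n) (a : Fin 2) :
    ((prisonersDilemma n).alt α).p i (Function.update s i a : Fin n → Fin 2)
      = ((prisonersDilemma n).alt α).p i s
        + (α * (2 * (n : ℝ) - 3) - 1) * (((a : ℕ) : ℝ) - ((s i : ℕ) : ℝ)) := by
  have h1 := pd_p_update n s i a
  have h2 := pd_SW_update n s i a
  change (prisonersDilemma n).p i (Function.update s i a : Fin n → Fin 2)
    + α * (prisonersDilemma n).SW (Function.update s i a : Fin n → Fin 2)
    = ((prisonersDilemma n).p i s + α * (prisonersDilemma n).SW s) + _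
  rw [h2]
  refine (congrArg (· + _) h1).trans ?_
  ring

theorem fin2_le_one (a : Fin 2) : ((a : ℕ) : ℝ) ≤ 1 := by
  have : (a : ℕ) ≤ 1 := by omega
  exact_mod_cast this

/-- the selfishness level of the `n`-players Prisoner's Dilemma game
equals `1/(2n - 3)`. -/
theorem selfishnessLevel_prisonersDilemma (n : ℕ) (hn : 2 ≤ n) :
    (prisonersDilemma n).selfishnessLevel = ENNReal.ofReal (1 / (2 * (n : ℝ) - 3)) := by
  have hn' : (2 : ℝ) ≤ n := by exact_mod_cast hn
  have hpos : 0 < 2 * (n : ℝ) - 3 := by linarith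
  unfold Game.selfishnessLevel
  apply le_antisymm
  · apply sInf_le
    refine ⟨1 / (2 * (n : ℝ) - 3), by positivity, ⟨(fun _ => 1 : Fin n → Fin 2), ?_, ?_⟩, rfl⟩
    · intro i a
      have h := pd_alt_update n (1 / (2 * (n : ℝ) - 3)) (fun _ => 1) i a
      rw [one_div_mul_cancel hpos.ne'] at h
      refine le_of_eq (h.trans ?_)
      simp
    · intro t
      have h1 := pd_SW n t
      have h2 := pd_SW n (fun _ => 1)
      refine h1.le.trans (le_trans ?_ h2.ge)
      gcongr with j
      simpa using fin2_le_one (t j)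
  · apply le_sInf
    rintro x ⟨α, hα, ⟨s, hs, ho⟩, rfl⟩
    apply ENNReal.ofReal_le_ofReal
    let i : Fin n := ⟨0, by omega⟩
    change Fin n → Fin 2 at s
    have h1 : ((s i : ℕ) : ℝ) = 1 := by
      have h := (pd_SW_update n s i 1).symm.le.trans (ho (Function.update s i 1 : Fin n → Fin 2))
      have hle := fin2_le_one (s i)
      have e : (((1 : Fin 2) : ℕ) : ℝ) = 1 := by simp
      rw [e] at h
      have : 1 - ((s i : ℕ) : ℝ) ≤ 0 := by
        by_contra hc
        push Not at hc
        have := mul_pos hpos hc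
        linarith
      linarith
    have h2 := (pd_alt_update n α s i 0).symm.le.trans (hs i (0 : Fin 2))
    have e : (((0 : Fin 2) : ℕ) : ℝ) = 0 := by simp
    rw [h1, e] at h2
    rw [div_le_iff₀ hpos]
    linarith
end

section
/- For every n ≥ 2, every budget b > 0 and every multiplier c > 1, the selfishness level of the n-players public goods game, in which each player i has strategy set [0, b] and payoff p_i(s) := b − s_i + (c/n)·Σ_{j∈N} s_j, equals max{0, (1 − c/n)/(c − 1)}. -/
open Finset
open scoped ENNReal

/-- The `n`-players public goods game with budget `b > 0` and multiplier `c`: each player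
contributes an amount in `[0, b]` and has payoff `pᵢ(s) = b - sᵢ + (c/n)·∑ⱼ sⱼ`. -/
noncomputable def publicGoods (n : ℕ) (b c : ℝ) (hb : 0 < b) : Game n where
  S := fun _ => Set.Icc (0 : ℝ) b
  ne := fun _ => ⟨⟨0, Set.mem_Icc.mpr ⟨le_refl 0, hb.le⟩⟩⟩
  p := fun i s => b - (s i : ℝ) + (c / n) * ∑ j, (s j : ℝ)

theorem pg_SW (n : ℕ) (hn : 2 ≤ n) (b c : ℝ) (hb : 0 < b) (s : Fin n → Set.Icc (0 : ℝ) b) :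
    (publicGoods n b c hb).SW s = n * b + (c - 1) * ∑ j, (s j : ℝ) := by
  have h0 : (n : ℝ) ≠ 0 := by
    have : n ≠ 0 := by omega
    exact_mod_cast this
  have : (publicGoods n b c hb).SW s
      = ∑ i : Fin n, (b - (s i : ℝ) + (c / n) * ∑ j, (s j : ℝ)) := rfl
  rw [this, Finset.sum_add_distrib, Finset.sum_sub_distrib]
  simp only [Finset.sum_const, Finset.card_univ, Fintype.card_fin, nsmul_eq_mul]
  field_simp
  ring

theorem pg_sum (n : ℕ) (b : ℝ) (s : Fin n → Set.Icc (0 : ℝ) b) (i : Fin n)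
    (x : Set.Icc (0 : ℝ) b) :
    ∑ j, (Function.update s i x j : ℝ) = ∑ j, (s j : ℝ) + (x - s i) := by
  rw [← Finset.add_sum_erase _ _ (Finset.mem_univ i),
    ← Finset.add_sum_erase univ (fun j => (s j : ℝ)) (Finset.mem_univ i)]
  have : ∑ j ∈ univ.erase i, (Function.update s i x j : ℝ) = ∑ j ∈ univ.erase i, (s j : ℝ) := by
    apply Finset.sum_congr rfl
    intro j hj
    rw [Function.update_of_ne (Finset.ne_of_mem_erase hj)]
  rw [this]
  simp
  ring

theorem pg_dev (n : ℕ) (hn : 2 ≤ n) (b c α : ℝ) (hb : 0 < b) (s : Fin n → Set.Icc (0 : ℝ) b)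
    (i : Fin n) (x : Set.Icc (0 : ℝ) b) :
    ((publicGoods n b c hb).alt α).p i (Function.update s i x)
      = ((publicGoods n b c hb).alt α).p i s
        + ((x : ℝ) - s i) * (α * (c - 1) - (1 - c / n)) := by
  have e : ∀ t : Fin n → Set.Icc (0 : ℝ) b, ((publicGoods n b c hb).alt α).p i t
      = b - (t i : ℝ) + (c / n) * ∑ j, (t j : ℝ) + α * (publicGoods n b c hb).SW t :=
    fun t => rfl
  have k1 : ∀ u : Fin n → Set.Icc (0 : ℝ) b, u i = x →
      ∑ j, (u j : ℝ) = ∑ j, (s j : ℝ) + (x - s i) →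
      ((publicGoods n b c hb).alt α).p i u = ((publicGoods n b c hb).alt α).p i s
        + ((x : ℝ) - s i) * (α * (c - 1) - (1 - c / n)) := by
    intro u h1 h2
    rw [e u, e s, pg_SW n hn, pg_SW n hn, h2, h1]
    ring
  exact k1 _ (Function.update_self ..) (pg_sum n b s i x)

theorem pg_selfish (n : ℕ) (hn : 2 ≤ n) (b c α : ℝ) (hb : 0 < b) (hc : 1 < c) :
    (publicGoods n b c hb).Selfish α ↔ (1 - c / n) / (c - 1) ≤ α := by
  rw [div_le_iff₀ (by linarith)]
  constructor
  · rintro ⟨s, hN, hO⟩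
    change Fin n → Set.Icc (0 : ℝ) b at s
    let i : Fin n := ⟨0, by omega⟩
    have h1 := hO (Function.update (β := fun _ => Set.Icc (0 : ℝ) b) s i ⟨b, hb.le, le_rfl⟩)
    have h2 := hN i (⟨0, le_rfl, hb.le⟩ : Set.Icc (0 : ℝ) b)
    have h3 := pg_dev n hn b c α hb s i ⟨0, le_rfl, hb.le⟩
    have h4 := h3.symm.trans_le h2
    have h5 := (pg_SW n hn b c hb _).symm.trans_le (h1.trans_eq (pg_SW n hn b c hb s))
    rw [pg_sum] at h5
    simp only at h4 h5
    have h6 : b ≤ (s i : ℝ) := by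
      by_contra hlt
      push Not at hlt
      nlinarith [mul_pos (sub_pos.2 hc) (sub_pos.2 hlt)]
    by_contra hlt
    push Not at hlt
    nlinarith [mul_pos (hb.trans_le h6) (sub_pos.2 hlt)]
  · intro h
    let s : Fin n → Set.Icc (0 : ℝ) b := fun _ => ⟨b, hb.le, le_rfl⟩
    refine ⟨s, ?_, ?_⟩
    · intro i x
      change Set.Icc (0 : ℝ) b at x
      refine (pg_dev n hn b c α hb s i x).trans_le ?_
      have hx : (x : ℝ) ≤ b := x.2.2
      have hs : (s i : ℝ) = b := rfl
      rw [hs]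
      nlinarith [mul_nonneg (sub_nonneg.2 hx) (sub_nonneg.2 h)]
    · intro t
      change Fin n → Set.Icc (0 : ℝ) b at t
      refine (pg_SW n hn b c hb t).trans_le (le_of_le_of_eq ?_ (pg_SW n hn b c hb s).symm)
      have : ∑ j, (t j : ℝ) ≤ ∑ j, (s j : ℝ) := Finset.sum_le_sum fun j _ => (t j).2.2
      have := mul_le_mul_of_nonneg_left this (sub_pos.2 hc).le
      linarith

/-- the selfishness level of the `n`-players public goods game with
budget `b > 0` and multiplier `c > 1` equals `max {0, (1 - c/n)/(c - 1)}`. -/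
theorem selfishnessLevel_publicGoods (n : ℕ) (hn : 2 ≤ n) (b c : ℝ) (hb : 0 < b)
    (hc : 1 < c) :
    (publicGoods n b c hb).selfishnessLevel
      = ENNReal.ofReal (max 0 ((1 - c / n) / (c - 1))) := by
  unfold Game.selfishnessLevel
  apply le_antisymm
  · exact sInf_le ⟨_, le_max_left _ _, (pg_selfish n hn b c _ hb hc).2 (le_max_right _ _), rfl⟩
  · apply le_sInf
    rintro x ⟨α, h0, hS, rfl⟩
    exact ENNReal.ofReal_le_ofReal (max_le h0 ((pg_selfish n hn b c _ hb hc).1 hS))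
end

section
/- For every n ≥ 2, the selfishness level of the n-players Tragedy of the Commons game, in which each player i has strategy set [0,1] and payoff p_i(s) := max(0, s_i·(1 − Σ_{j∈N} s_j)), is infinite; that is, for no α ≥ 0 is the game α-selfish. -/
open Finset
open scoped ENNReal

/-- The `n`-players Tragedy of the Commons game: each player chooses a fraction in `[0,1]`
and has payoff `pᵢ(s) = max (0, sᵢ·(1 - ∑ⱼ sⱼ))`. -/
def tragedyOfCommons (n : ℕ) : Game n where
  S := fun _ => Set.Icc (0 : ℝ) 1
  ne := fun _ => ⟨⟨0, Set.mem_Icc.mpr ⟨le_refl 0, zero_le_one⟩⟩⟩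
  p := fun i s => max 0 ((s i : ℝ) * (1 - ∑ j, (s j : ℝ)))

theorem toc_SW (n : ℕ) (s : Fin n → Set.Icc (0 : ℝ) 1) :
    (tragedyOfCommons n).SW s = max 0 ((∑ j, (s j : ℝ)) * (1 - ∑ j, (s j : ℝ))) := by
  show ∑ i, max 0 ((s i : ℝ) * (1 - ∑ j, (s j : ℝ))) = _
  have h0 : 0 ≤ ∑ j, (s j : ℝ) := Finset.sum_nonneg fun i _ => (s i).2.1
  generalize hT : 1 - ∑ j, (s j : ℝ) = c
  rcases le_total 0 c with hc | hc
  · rw [max_eq_right (mul_nonneg h0 hc), Finset.sum_mul]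
    exact Finset.sum_congr rfl fun i _ => max_eq_right (mul_nonneg (s i).2.1 hc)
  · rw [max_eq_left (mul_nonpos_of_nonneg_of_nonpos h0 hc)]
    exact Finset.sum_eq_zero fun i _ =>
      max_eq_left (mul_nonpos_of_nonneg_of_nonpos (s i).2.1 hc)

theorem toc_sum_update (n : ℕ) (s : Fin n → Set.Icc (0 : ℝ) 1) (i : Fin n)
    (x : Set.Icc (0 : ℝ) 1) :
    ∑ j, ((Function.update s i x j : Set.Icc (0 : ℝ) 1) : ℝ)
      = (∑ j, (s j : ℝ)) + ((x : ℝ) - s i) := by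
  rw [← Finset.add_sum_erase _ _ (Finset.mem_univ i),
    ← Finset.add_sum_erase _ (fun j => (s j : ℝ)) (Finset.mem_univ i)]
  have : ∑ j ∈ Finset.univ.erase i, ((Function.update s i x j : Set.Icc (0 : ℝ) 1) : ℝ)
      = ∑ j ∈ Finset.univ.erase i, (s j : ℝ) := by
    refine Finset.sum_congr rfl fun j hj => ?_
    rw [Function.update_of_ne (Finset.ne_of_mem_erase hj)]
  rw [this, Function.update_self]
  ring

theorem toc_not_selfish (n : ℕ) (hn : 2 ≤ n) (α : ℝ) (hα : 0 ≤ α) :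
    ¬ (tragedyOfCommons n).Selfish α := by
  rintro ⟨s, hN, hO⟩
  change Fin n → Set.Icc (0 : ℝ) 1 at s
  let i0 : Fin n := ⟨0, by omega⟩
  let i1 : Fin n := ⟨1, by omega⟩
  have hT : ∑ j, (s j : ℝ) = 1 / 2 := by
    have h := hO (Function.update (fun _ => (⟨0, by norm_num⟩ : Set.Icc (0 : ℝ) 1)) i0
      (⟨1 / 2, by norm_num⟩ : Set.Icc (0 : ℝ) 1))
    erw [toc_SW, toc_SW, toc_sum_update] at h
    simp only [Finset.sum_const_zero] at h
    have h1 : (1 / 4 : ℝ) ≤ max 0 ((∑ j, (s j : ℝ)) * (1 - ∑ j, (s j : ℝ))) := by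
      refine le_trans ?_ h
      norm_num
    rcases le_max_iff.1 h1 with h2 | h2
    · norm_num at h2
    · nlinarith [sq_nonneg ((∑ j, (s j : ℝ)) - 1 / 2)]
  have h01 : (s i0 : ℝ) + s i1 ≤ 1 / 2 := by
    rw [← hT, ← Finset.sum_pair (f := fun j => (s j : ℝ)) (show i0 ≠ i1 by simp [i0, i1])]
    exact Finset.sum_le_sum_of_subset_of_nonneg (Finset.subset_univ _) fun i _ _ => (s i).2.1
  obtain ⟨i, hi⟩ : ∃ i, (s i : ℝ) ≤ 1 / 4 := by
    by_contra! hc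
    linarith [hc i0, hc i1]
  have hi0 : 0 ≤ (s i : ℝ) := (s i).2.1
  obtain ⟨e, he0, he⟩ : ∃ e : ℝ, 0 < e ∧ (1 + α) * e = 1 / 8 :=
    ⟨1 / (8 * (1 + α)), by positivity, by field_simp⟩
  have he8 : e ≤ 1 / 8 := by nlinarith
  have key := hN i (⟨s i + e, by constructor <;> linarith⟩ : Set.Icc (0 : ℝ) 1)
  set x : Set.Icc (0 : ℝ) 1 := ⟨s i + e, by constructor <;> linarith⟩ with hx
  change max 0 (((Function.update s i x i : Set.Icc (0 : ℝ) 1) : ℝ) *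
      (1 - ∑ j, ((Function.update s i x j : Set.Icc (0 : ℝ) 1) : ℝ)))
      + α * (tragedyOfCommons n).SW (Function.update s i x)
    ≤ max 0 ((s i : ℝ) * (1 - ∑ j, (s j : ℝ))) + α * (tragedyOfCommons n).SW s at key
  have e1 := toc_SW n (Function.update s i x)
  have e2 := toc_SW n s
  have e3 := toc_sum_update n s i x
  have hxv : (x : ℝ) = s i + e := rfl
  rw [hT, hxv] at e3
  rw [e3] at e1 key
  rw [hT] at e2 key
  erw [e1, e2] at key
  rw [Function.update_self, hxv] at key
  clear_value x
  clear e1 e2 e3 hx hxv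
  generalize (s i : ℝ) = a at key hi hi0
  have m1 := le_max_right 0 ((a + e) * (1 - (1 / 2 + (a + e - a))))
  have m2 := le_max_right 0 ((1 / 2 + (a + e - a)) * (1 - (1 / 2 + (a + e - a))))
  rw [max_eq_right (show 0 ≤ a * (1 - 1 / 2) by linarith),
    max_eq_right (show (0 : ℝ) ≤ 1 / 2 * (1 - 1 / 2) by norm_num)] at key
  have m3 := mul_le_mul_of_nonneg_left m2 hα
  have hp : 0 < e * (1 / 2 - a - (1 + α) * e) := mul_pos he0 (by linarith)
  nlinarith

/-- the selfishness level of the `n`-players Tragedy of the Commons game is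
infinite; that is, for no `α ≥ 0` is the game `α`-selfish. -/
theorem selfishnessLevel_tragedyOfCommons (n : ℕ) (hn : 2 ≤ n) :
    (tragedyOfCommons n).selfishnessLevel = ⊤ ∧
    ∀ α : ℝ, 0 ≤ α → ¬ (tragedyOfCommons n).Selfish α := by
  refine ⟨?_, fun α hα => toc_not_selfish n hn α hα⟩
  unfold Game.selfishnessLevel
  rw [sInf_eq_top]
  rintro x ⟨α, hα, h, -⟩
  exact absurd h (toc_not_selfish n hn α hα)
end
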